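/- Fix q ∈ ℝ with 0 < q < 1 and nonzero A, B, δ, u ∈ ℂ, let γ ∈ ℂ with γ² = 4q/(ABδ), γ ≠ 0, and set z = γ(u + 1/u)/2. Fix n ∈ ℕ and assume (A;q)_ℓ ≠ 0 and (B;q)_ℓ ≠ 0 for all ℓ ≤ n, and (2u/(γδ);q)_j ≠ 0 and (2u/γ;q)_j ≠ 0 for all j ≤ n. Then the monic associated Al-Salam–Chihara polynomial satisfies Q_n(z) = (γu/2)ⁿ (A;q)_n (B;q)_n / (q;q)_n · ∑_{ℓ=0}^n { [(q^{−n};q)_ℓ (2u/(γδ);q)_ℓ (2u/γ;q)_ℓ / ((A;q)_ℓ (B;q)_ℓ)] (−1)^ℓ u^{−2ℓ} q^{nℓ} q^{−ℓ(ℓ−1)/2} · ∑_{j=0}^ℓ [(A/q;q)_j (B/q;q)_j / ((q;q)_j (2u/(γδ);q)_j (2u/γ;q)_j)] (−1)^j u^{2j} q^{j(j+1)/2} }. -/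

import Mathlib

/-!
Put `s = 2u/(γδ)`, `t = 2u/γ`, `w = u²`, so that `s t = A B w / q`, and write
`Q_n(z) = (γu/2)ⁿ (A;q)_n (B;q)_n p_n`. With `p_{-1} = 0` the recurrence becomes, for all `n ≥ 0`,
`(1 - A qⁿ)(1 - B qⁿ) p_{n+1} = (1 + 1/w - (s + t) qⁿ/w) p_n - p_{n-1}/w`.

In terms of the generating function this is an inhomogeneous second-order `q`-difference equation.
Substituting `∑ p_n xⁿ = C(x) / (x;q)_∞` and cancelling a factor `1 - x` turns it into a first-order
recurrence for the coefficients `c_l` of `C`,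
`(1 - A q^l)(1 - B q^l) c_{l+1} - (1 - s q^l)(1 - t q^l) c_l / w = (1 - A/q)(1 - B/q) f_{l+1}`,
where `f_k = (-1)^k q^{k(k+1)/2} / (q;q)_k` are the coefficients of `(qx;q)_∞`. Its solution with
`c_0 = 1` is a prefactor times a partial sum (`cTerm`, `cTerm_rec`), and
`p_n = ∑_{l ≤ n} c_l / (q;q)_{n-l}` is the explicit formula after rewriting `1 / (q;q)_{n-l}` through
`(q^{-n};q)_l` (`qp_neg`).

The passage from `c` to `p` (`conv_rec`) is carried out on finite sums, because the `c_l` are only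
meaningful for `l ≤ n`: the combination of the `p`'s is termwise a convolution of the recurrence for
`c` with the coefficients of `1 / (qx;q)_∞`, and this vanishes by `sum_euler`.
-/

open Filter

noncomputable def qp (q a : ℂ) (n : ℕ) : ℂ := ∏ j ∈ Finset.range n, (1 - a * q ^ j)
noncomputable def qpInf (q a : ℂ) : ℂ := ∏' j : ℕ, (1 - a * q ^ j)
noncomputable def phi32 (q a b c d e w : ℂ) : ℂ :=
  ∑' k : ℕ, (qp q a k * qp q b k * qp q c k) / (qp q d k * qp q e k * qp q q k) * w ^ k
noncomputable def phi21 (q a b c w : ℂ) : ℂ :=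
  ∑' k : ℕ, (qp q a k * qp q b k) / (qp q c k * qp q q k) * w ^ k
noncomputable def phi11 (q a b w : ℂ) : ℂ :=
  ∑' k : ℕ, qp q a k / (qp q b k * qp q q k) * (-1) ^ k * q ^ (k * (k - 1) / 2) * w ^ k

noncomputable def Prec {K : Type*} [Field K] (a b2 : ℕ → K) (z : K) : ℕ → K
  | 0 => 1
  | 1 => z - a 0
  | n + 2 => (z - a (n + 1)) * Prec a b2 z (n + 1) - b2 (n + 1) * Prec a b2 z n

noncomputable def aCDH (q A B C D : ℂ) (n : ℕ) : ℂ :=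
  (1 / A + 1 / B + 1 / C + 1 / D) * q ^ (n : ℤ) - (1 + q) * q ^ (2 * (n : ℤ) - 1)

noncomputable def bCDH (q A B C D : ℂ) (n : ℕ) : ℂ :=
  q / (A * B * C * D) * (1 - A * q ^ ((n : ℤ) - 1)) * (1 - B * q ^ ((n : ℤ) - 1)) *
    (1 - C * q ^ ((n : ℤ) - 1)) * (1 - D * q ^ ((n : ℤ) - 1))

/-- `X` solves the associated continuous dual `q`-Hahn recurrence
`X_{n+1} - (z - a_n) X_n + b_n² X_{n-1} = 0` for `n ≥ 1`. -/
def SolvesCDH (q A B C D z : ℂ) (X : ℕ → ℂ) : Prop :=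
  ∀ n : ℕ, 1 ≤ n →
    X (n + 1) - (z - aCDH q A B C D n) * X n + bCDH q A B C D n * X (n - 1) = 0

/-! ### The series of `(x; q)_∞` and of its reciprocal -/

/-- The coefficients of `1 / (x; q)_∞` delayed by two places: `qInv q (k + 2) = 1 / (q; q)_k`, with
two leading zeros standing for the coefficients of `x⁻²` and `x⁻¹`. The delay makes
`qInv_step` and `qInv_step'` hold without boundary cases. -/
noncomputable def qInv (q : ℂ) : ℕ → ℂ
  | 0 => 0
  | 1 => 0
  | k + 2 => 1 / qp q q k

lemma qp_zero (q a : ℂ) : qp q a 0 = 1 := by simp [qp]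

lemma qp_succ (q a : ℂ) (n : ℕ) : qp q a (n + 1) = qp q a n * (1 - a * q ^ n) := by
  simp [qp, Finset.prod_range_succ]

lemma qp_div_succ (q a : ℂ) (hq : q ≠ 0) (n : ℕ) :
    qp q (a / q) (n + 1) = (1 - a / q) * qp q a n := by
  unfold qp
  rw [Finset.prod_range_succ', mul_comm]
  congr 1
  · simp
  · refine Finset.prod_congr rfl fun j _ => ?_
    rw [pow_succ]
    field_simp

lemma qp_self_ne (q : ℂ) (hq : ∀ k : ℕ, 1 - q ^ (k + 1) ≠ 0) (n : ℕ) : qp q q n ≠ 0 := by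
  unfold qp
  refine Finset.prod_ne_zero_iff.2 fun j _ => ?_
  have := hq j
  rwa [pow_succ'] at this

/-- The `q`-difference equation of `1 / (x; q)_∞`, coefficientwise. -/
lemma qInv_step (q : ℂ) (hq : ∀ k : ℕ, 1 - q ^ (k + 1) ≠ 0) (k : ℕ) :
    (1 - q ^ k) * qInv q (k + 2) = qInv q (k + 1) := by
  cases k with
  | zero => simp [qInv]
  | succ k =>
    have h1 := qp_self_ne q hq k
    have h2 := hq k
    have h3 : qp q q (k + 1) = qp q q k * (1 - q ^ (k + 1)) := by rw [qp_succ, pow_succ']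
    simp only [qInv, h3]
    field_simp

/-- `qInv_step` with the index lowered by one, stated so that it includes index `0`. -/
lemma qInv_step' (q : ℂ) (hq0 : q ≠ 0) (hq : ∀ k : ℕ, 1 - q ^ (k + 1) ≠ 0) (k : ℕ) :
    (1 - q ^ k / q) * qInv q (k + 1) = qInv q k := by
  cases k with
  | zero => simp [qInv]
  | succ k =>
    rw [← qInv_step q hq k, pow_succ, mul_div_cancel_right₀ _ hq0]

lemma tri_succ (k : ℕ) : (k + 1) * (k + 1 + 1) / 2 = k * (k + 1) / 2 + (k + 1) := by
  rw [show (k + 1) * (k + 1 + 1) = k * (k + 1) + (k + 1) * 2 by ring,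
    Nat.add_mul_div_right _ _ (by norm_num)]

/-- The product of the series of `(qx; q)_∞` and of its reciprocal has no term of positive
degree. -/
lemma sum_euler (q : ℂ) (hq0 : q ≠ 0) (hq : ∀ k : ℕ, 1 - q ^ (k + 1) ≠ 0) (N : ℕ) :
    ∑ k ∈ Finset.range (N + 2), q ^ (N + 1 - k) * qInv q (N + 1 - k + 2) *
      ((-1) ^ k * q ^ (k * (k + 1) / 2) * qInv q (k + 2)) = 0 := by
  -- `1 - q ^ (N + 1) = (1 - q ^ k) + q ^ k (1 - q ^ (N + 1 - k))` makes the sum telescope.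
  set T : ℕ → ℂ := fun k => q ^ (N + 1) * ((-1) ^ k * q ^ (k * (k + 1) / 2) / q ^ k) *
    qInv q (k + 1) * qInv q (N + 3 - k) with hT
  have key : (1 - q ^ (N + 1)) * ∑ k ∈ Finset.range (N + 2), q ^ (N + 1 - k) *
      qInv q (N + 1 - k + 2) * ((-1) ^ k * q ^ (k * (k + 1) / 2) * qInv q (k + 2)) =
      ∑ k ∈ Finset.range (N + 2), (T k - T (k + 1)) := by
    rw [Finset.mul_sum]
    refine Finset.sum_congr rfl fun k hk => ?_
    obtain ⟨j, hj⟩ : ∃ j, N + 1 = k + j := ⟨N + 1 - k, by have := Finset.mem_range.1 hk; omega⟩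
    simp only [hT]
    rw [show N + 3 - k = j + 2 by omega, show N + 3 - (k + 1) = j + 1 by omega,
      show N + 1 - k = j by omega, hj, tri_succ, ← qInv_step q hq k, ← qInv_step q hq j,
      pow_add q (k * (k + 1) / 2), pow_succ (-1 : ℂ), pow_add]
    field_simp
    ring
  rw [Finset.sum_range_sub'] at key
  have h0 : T 0 = 0 := by simp [hT, qInv]
  have h1 : T (N + 2) = 0 := by
    simp only [hT]; rw [show N + 3 - (N + 2) = 1 by omega]; simp [qInv]
  rw [h0, h1, sub_zero] at key
  exact (mul_eq_zero.1 key).resolve_left (hq N)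

/-! ### Reduction to a first-order recurrence -/

/-- If `c` satisfies the first-order recurrence `hR`, then its product with the series of
`1 / (x; q)_∞` satisfies the renormalised Al-Salam–Chihara recurrence. -/
lemma conv_rec (q A B s t w : ℂ) (hq0 : q ≠ 0) (hq : ∀ k : ℕ, 1 - q ^ (k + 1) ≠ 0)
    (hw : w ≠ 0) (hst : s * t = A * B * w / q) (c : ℕ → ℂ) (hc0 : c 0 = 1) (N : ℕ)
    (hR : ∀ l ≤ N, (1 - A * q ^ l) * (1 - B * q ^ l) * c (l + 1) -
      1 / w * ((1 - s * q ^ l) * (1 - t * q ^ l)) * c l =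
      (1 - A / q) * (1 - B / q) *
        ((-1) ^ (l + 1) * q ^ ((l + 1) * (l + 1 + 1) / 2) * qInv q (l + 1 + 2))) :
    (1 - A * q ^ N) * (1 - B * q ^ N) * ∑ l ∈ Finset.range (N + 2), c l * qInv q (N + 1 - l + 2) =
      (1 + 1 / w - (s + t) * q ^ N / w) *
        ∑ l ∈ Finset.range (N + 2), c l * qInv q (N + 1 - l + 1) -
      1 / w * ∑ l ∈ Finset.range (N + 2), c l * qInv q (N + 1 - l) := by
  have h1 : (1 - A * q ^ N) * (1 - B * q ^ N) *
        ∑ l ∈ Finset.range (N + 2), c l * qInv q (N + 1 - l + 2) -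
      ((1 + 1 / w - (s + t) * q ^ N / w) *
        ∑ l ∈ Finset.range (N + 2), c l * qInv q (N + 1 - l + 1) -
      1 / w * ∑ l ∈ Finset.range (N + 2), c l * qInv q (N + 1 - l)) =
      ∑ l ∈ Finset.range (N + 2), q ^ (N + 1 - l) * qInv q (N + 1 - l + 2) *
        ((1 - A * (q ^ l / q)) * (1 - B * (q ^ l / q)) * c l) -
      ∑ l ∈ Finset.range (N + 2), q ^ (N + 1 - l) / q * qInv q (N + 1 - l + 1) *
        (1 / w * ((1 - s * q ^ l) * (1 - t * q ^ l)) * c l) := by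
    simp only [Finset.mul_sum, ← Finset.sum_sub_distrib]
    refine Finset.sum_congr rfl fun l hl => ?_
    obtain ⟨k, hk⟩ : ∃ k, N + 1 = l + k := ⟨N + 1 - l, by have := Finset.mem_range.1 hl; omega⟩
    have hN : q ^ N = q ^ l * q ^ k / q := by
      rw [← pow_add, ← hk, pow_succ, mul_div_cancel_right₀ _ hq0]
    rw [show N + 1 - l = k by omega, hN, ← qInv_step' q hq0 hq k, ← qInv_step q hq k]
    have hst' : A * B = s * t * q / w := by rw [hst]; field_simp
    set X := qInv q (k + 2)
    have e : ∀ x : ℂ, (1 - A * x) * (1 - B * x) = 1 - (A + B) * x + s * t * q / w * x ^ 2 := by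
      intro x; rw [← hst']; ring
    rw [e, e]
    field_simp
    ring
  have h2 : ∑ l ∈ Finset.range (N + 2), q ^ (N + 1 - l) * qInv q (N + 1 - l + 2) *
        ((1 - A * (q ^ l / q)) * (1 - B * (q ^ l / q)) * c l) -
      ∑ l ∈ Finset.range (N + 2), q ^ (N + 1 - l) / q * qInv q (N + 1 - l + 1) *
        (1 / w * ((1 - s * q ^ l) * (1 - t * q ^ l)) * c l) =
      (1 - A / q) * (1 - B / q) *
      ∑ k ∈ Finset.range (N + 2), q ^ (N + 1 - k) * qInv q (N + 1 - k + 2) *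
      ((-1) ^ k * q ^ (k * (k + 1) / 2) * qInv q (k + 2)) := by
    rw [Finset.sum_range_succ', Finset.sum_range_succ (fun l => q ^ (N + 1 - l) / q *
      qInv q (N + 1 - l + 1) * (1 / w * ((1 - s * q ^ l) * (1 - t * q ^ l)) * c l)),
      Finset.sum_range_succ' (fun k => q ^ (N + 1 - k) * qInv q (N + 1 - k + 2) *
      ((-1) ^ k * q ^ (k * (k + 1) / 2) * qInv q (k + 2)))]
    have hz : qInv q (N + 1 - (N + 1) + 1) = 0 := by simp [qInv]
    rw [hz, mul_add, Finset.mul_sum, hc0]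
    have h3 : ∀ l ∈ Finset.range (N + 1),
        (1 - A / q) * (1 - B / q) * (q ^ (N + 1 - (l + 1)) * qInv q (N + 1 - (l + 1) + 2) *
          ((-1) ^ (l + 1) * q ^ ((l + 1) * (l + 1 + 1) / 2) * qInv q (l + 1 + 2))) =
        q ^ (N + 1 - (l + 1)) * qInv q (N + 1 - (l + 1) + 2) *
          ((1 - A * (q ^ (l + 1) / q)) * (1 - B * (q ^ (l + 1) / q)) * c (l + 1)) -
        q ^ (N + 1 - l) / q * qInv q (N + 1 - l + 1) *
          (1 / w * ((1 - s * q ^ l) * (1 - t * q ^ l)) * c l) := by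
      intro l hl
      have hl' : l ≤ N := by have := Finset.mem_range.1 hl; omega
      have hR' := hR l hl'
      rw [show N + 1 - (l + 1) = N - l by omega, show N + 1 - l = N - l + 1 by omega, pow_succ q l,
        pow_succ q (N - l), mul_div_cancel_right₀ _ hq0, mul_div_cancel_right₀ _ hq0]
      linear_combination (-(q ^ (N - l) * qInv q (N - l + 2))) * hR'
    rw [Finset.sum_congr rfl h3, Finset.sum_sub_distrib]
    simp [qInv, qp_zero]
    ring
  rw [h2, sum_euler q hq0 hq N, mul_zero] at h1
  exact sub_eq_zero.1 h1

/-- The inner summand of the explicit formula, with `w = u²`, `s = 2u/(γδ)` and `t = 2u/γ`. -/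
noncomputable def dTerm (q A B s t w : ℂ) (j : ℕ) : ℂ :=
  (qp q (A / q) j * qp q (B / q) j / (qp q q j * qp q s j * qp q t j)) *
    (-1) ^ j * w ^ j * q ^ (j * (j + 1) / 2)

/-- The solution of the first-order recurrence `cTerm_rec` with initial value `1`. -/
noncomputable def cTerm (q A B s t w : ℂ) (l : ℕ) : ℂ :=
  qp q s l * qp q t l / (qp q A l * qp q B l * w ^ l) *
    ∑ j ∈ Finset.range (l + 1), dTerm q A B s t w j

lemma cTerm_rec (q A B s t w : ℂ) (hq0 : q ≠ 0) (hq : ∀ k : ℕ, 1 - q ^ (k + 1) ≠ 0)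
    (hw : w ≠ 0) (l : ℕ) (hA : qp q A (l + 1) ≠ 0) (hB : qp q B (l + 1) ≠ 0)
    (hs : qp q s (l + 1) ≠ 0) (ht : qp q t (l + 1) ≠ 0) :
    (1 - A * q ^ l) * (1 - B * q ^ l) * cTerm q A B s t w (l + 1) -
      1 / w * ((1 - s * q ^ l) * (1 - t * q ^ l)) * cTerm q A B s t w l =
      (1 - A / q) * (1 - B / q) *
        ((-1) ^ (l + 1) * q ^ ((l + 1) * (l + 1 + 1) / 2) * qInv q (l + 1 + 2)) := by
  have hQ := qp_self_ne q hq (l + 1)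
  unfold cTerm
  rw [Finset.sum_range_succ _ (l + 1)]
  set S := ∑ j ∈ Finset.range (l + 1), dTerm q A B s t w j
  simp only [dTerm, qInv, qp_div_succ q _ hq0]
  rw [qp_succ] at hA hB hs ht
  obtain ⟨hA1, hA2⟩ := mul_ne_zero_iff.1 hA
  obtain ⟨hB1, hB2⟩ := mul_ne_zero_iff.1 hB
  obtain ⟨hs1, hs2⟩ := mul_ne_zero_iff.1 hs
  obtain ⟨ht1, ht2⟩ := mul_ne_zero_iff.1 ht
  rw [qp_succ q A, qp_succ q B, qp_succ q s, qp_succ q t, pow_succ w]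
  generalize 1 - A * q ^ l = a at *
  generalize 1 - B * q ^ l = b at *
  generalize 1 - s * q ^ l = x at *
  generalize 1 - t * q ^ l = y at *
  generalize 1 - A / q = a' at *
  generalize 1 - B / q = b' at *
  field_simp
  ring

/-! ### The renormalised polynomials and the explicit formula -/

/-- The renormalised polynomials `p_m = ∑ l ≤ m, c_l / (q; q)_{m - l}`. -/
noncomputable def pSum (q A B s t w : ℂ) (m : ℕ) : ℂ :=
  ∑ l ∈ Finset.range (m + 1), cTerm q A B s t w l * qInv q (m - l + 2)

lemma cTerm_zero (q A B s t w : ℂ) : cTerm q A B s t w 0 = 1 := by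
  simp [cTerm, dTerm, qp_zero]

lemma pSum_zero (q A B s t w : ℂ) : pSum q A B s t w 0 = 1 := by
  simp [pSum, cTerm_zero, qInv, qp_zero]

/-- The sum with `qInv q (N + 1 - l + 1)` has a vanishing last term. -/
lemma pSum_eq_one (q A B s t w : ℂ) (N : ℕ) :
    ∑ l ∈ Finset.range (N + 2), cTerm q A B s t w l * qInv q (N + 1 - l + 1) =
      pSum q A B s t w N := by
  rw [Finset.sum_range_succ, pSum]
  simp only [Nat.sub_self, qInv, zero_add, mul_zero, add_zero]
  refine Finset.sum_congr rfl fun l hl => ?_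
  rw [show N + 1 - l + 1 = N - l + 2 by have := Finset.mem_range.1 hl; omega]

/-- The sum with `qInv q (N + 2 - l)` has two vanishing last terms. -/
lemma pSum_eq_two (q A B s t w : ℂ) (N : ℕ) :
    ∑ l ∈ Finset.range (N + 3), cTerm q A B s t w l * qInv q (N + 1 + 1 - l) =
      pSum q A B s t w N := by
  rw [Finset.sum_range_succ, Finset.sum_range_succ, pSum]
  simp only [Nat.sub_self, Nat.add_sub_cancel_left, qInv, mul_zero, add_zero]
  refine Finset.sum_congr rfl fun l hl => ?_
  rw [show N + 1 + 1 - l = N - l + 2 by have := Finset.mem_range.1 hl; omega]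

/-- Reversal of `(q^{-n}; q)_l`. -/
lemma qp_neg (q : ℂ) (hq0 : q ≠ 0) (hq : ∀ k : ℕ, 1 - q ^ (k + 1) ≠ 0) (n l : ℕ) (hl : l ≤ n) :
    qp q (q ^ (-(n : ℤ))) l * (-1) ^ l * q ^ (n * l) * q ^ (-(l * (l - 1) : ℤ) / 2) =
      qp q q n * qInv q (n - l + 2) := by
  induction l with
  | zero =>
    have := qp_self_ne q hq n
    simp [qp_zero, qInv, this]
  | succ l ih =>
    have ih' := ih (by omega)
    obtain ⟨k, rfl⟩ : ∃ k, n = l + 1 + k := ⟨n - (l + 1), by omega⟩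
    have e1 : l + 1 + k - (l + 1) = k := by omega
    have e2 : l + 1 + k - l = k + 1 := by omega
    rw [e2] at ih'
    rw [e1]
    have h1 := qInv_step q hq (k + 1)
    have h3 : q ^ (-((l + 1 : ℕ) * ((l + 1 : ℕ) - 1) : ℤ) / 2) =
        q ^ (-(l * (l - 1) : ℤ) / 2) / q ^ l := by
      rw [← zpow_natCast q l, ← zpow_sub₀ hq0]
      congr 1
      rw [show (-(((l + 1 : ℕ) : ℤ) * (((l + 1 : ℕ) : ℤ) - 1)) : ℤ) =
        -((l : ℤ) * (l - 1)) + (-(l : ℤ)) * 2 by push_cast; ring,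
        Int.add_mul_ediv_right _ _ (by norm_num)]
      ring
    have h4 : q ^ (-((l + 1 + k : ℕ) : ℤ)) * q ^ (l + 1 + k) = 1 := by
      rw [zpow_neg, zpow_natCast]
      exact inv_mul_cancel₀ (pow_ne_zero _ hq0)
    have h5 : (1 - q ^ (-((l + 1 + k : ℕ) : ℤ)) * q ^ l) * (-1) * q ^ (l + 1 + k) / q ^ l =
        1 - q ^ (k + 1) := by
      have : q ^ (l + 1 + k) = q ^ l * q ^ (k + 1) := by rw [← pow_add]; congr 1; ring
      have hl := pow_ne_zero l hq0
      rw [div_eq_iff hl]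
      linear_combination (q ^ l) * h4 - this
    rw [h3, qp_succ, ← h1, mul_add, mul_one, pow_add q, pow_succ (-1 : ℂ)]
    linear_combination (1 - q ^ (k + 1)) * ih' + (qp q (q ^ (-((l + 1 + k : ℕ) : ℤ))) l *
      (-1) ^ l * q ^ ((l + 1 + k) * l) * q ^ (-(l * (l - 1) : ℤ) / 2)) * h5

/-- The polynomials in terms of `pSum`. In the application `g = γu/2`, and `hz`, `hδ`, `hg` are the
relations between `z`, `δ`, `γ` and `s`, `t`, `w`. -/
lemma prec_eq (q A B s t w g δ z : ℂ) (hq0 : q ≠ 0) (hq : ∀ k : ℕ, 1 - q ^ (k + 1) ≠ 0)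
    (hw : w ≠ 0) (hst : s * t = A * B * w / q)
    (hz : z = g * (1 + 1 / w)) (hδ : 1 + δ⁻¹ = g * (s + t) / w)
    (hg : q / (A * B * δ) = g ^ 2 / w) (n : ℕ)
    (hA : ∀ l ≤ n, qp q A l ≠ 0) (hB : ∀ l ≤ n, qp q B l ≠ 0)
    (hs : ∀ l ≤ n, qp q s l ≠ 0) (ht : ∀ l ≤ n, qp q t l ≠ 0) (m : ℕ) (hm : m ≤ n) :
    Prec (fun k => (1 + δ⁻¹) * q ^ k)
        (fun k => q / (A * B * δ) * (1 - A * q ^ ((k : ℤ) - 1)) *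
          (1 - B * q ^ ((k : ℤ) - 1))) z m =
      g ^ m * (qp q A m * qp q B m) * pSum q A B s t w m := by
  have hrec := fun (N : ℕ) (hN : N + 1 ≤ n) => conv_rec q A B s t w hq0 hq hw hst
    (cTerm q A B s t w) (cTerm_zero _ _ _ _ _ _) N (fun l hl => cTerm_rec q A B s t w hq0 hq hw l
      (hA _ (by omega)) (hB _ (by omega)) (hs _ (by omega)) (ht _ (by omega)))
  induction m using Nat.strong_induction_on with
  | _ m ih =>
  match m with
  | 0 => simp [Prec, pSum_zero, qp_zero]
  | 1 =>
    have h := hrec 0 hm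
    rw [pSum_eq_one, pSum_zero] at h
    have h0 : ∑ l ∈ Finset.range (0 + 2), cTerm q A B s t w l * qInv q (0 + 1 - l) = 0 := by
      simp [Finset.sum_range_succ, qInv]
    rw [h0] at h
    change _ = _ * pSum q A B s t w 1
    change (1 - A * q ^ 0) * (1 - B * q ^ 0) * pSum q A B s t w 1 = _ at h
    simp only [Prec, qp_succ, qp_zero, hz, hδ]
    linear_combination -g * h
  | m + 2 =>
    have h := hrec (m + 1) hm
    rw [pSum_eq_one, pSum_eq_two] at h
    change _ * pSum q A B s t w (m + 2) = _ at h
    have i1 := ih (m + 1) (by omega) (by omega)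
    have i0 := ih m (by omega) (by omega)
    rw [Prec, i1, i0, hg, hz, hδ]
    have e : q ^ (((m + 1 : ℕ) : ℤ) - 1) = q ^ m := by
      push_cast; rw [add_sub_cancel_right, zpow_natCast]
    rw [e, qp_succ q A (m + 1), qp_succ q B (m + 1)]
    have hA' := qp_succ q A m
    have hB' := qp_succ q B m
    -- The factors of `b²` at index `m + 1` complete the Pochhammer symbols of length `m`.
    have hAB : (1 - A * q ^ m) * (1 - B * q ^ m) * (qp q A m * qp q B m) =
        qp q A (m + 1) * qp q B (m + 1) := by rw [hA', hB']; ring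
    linear_combination (-(g ^ (m + 2) * (qp q A (m + 1) * qp q B (m + 1)))) * h -
      g ^ (m + 2) / w * pSum q A B s t w m * hAB

/-- Explicit formula (6.9) for the monic associated Al-Salam--Chihara polynomials. -/
theorem stmt17 (q : ℝ) (hq0 : 0 < q) (hq1 : q < 1)
    (A B δ u : ℂ) (hA : A ≠ 0) (hB : B ≠ 0) (hδ : δ ≠ 0) (hu : u ≠ 0)
    (γ : ℂ) (hγ : γ ^ 2 = 4 * (q : ℂ) / (A * B * δ)) (hγ0 : γ ≠ 0)
    (z : ℂ) (hz : z = γ * (u + 1 / u) / 2)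
    (n : ℕ)
    (hAn : ∀ l ≤ n, qp q A l ≠ 0) (hBn : ∀ l ≤ n, qp q B l ≠ 0)
    (hγδ : ∀ j ≤ n, qp q (2 * u / (γ * δ)) j ≠ 0) (hγu : ∀ j ≤ n, qp q (2 * u / γ) j ≠ 0) :
    Prec (fun k => (1 + δ⁻¹) * (q : ℂ) ^ k)
        (fun k => (q : ℂ) / (A * B * δ) * (1 - A * (q : ℂ) ^ ((k : ℤ) - 1)) *
          (1 - B * (q : ℂ) ^ ((k : ℤ) - 1))) z n =
      (γ * u / 2) ^ n * (qp q A n * qp q B n) / qp q q n *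
        ∑ l ∈ Finset.range (n + 1),
          (qp q ((q : ℂ) ^ (-(n : ℤ))) l * qp q (2 * u / (γ * δ)) l * qp q (2 * u / γ) l /
              (qp q A l * qp q B l)) *
            (-1) ^ l * u ^ (-(2 * l : ℤ)) * (q : ℂ) ^ (n * l) *
            (q : ℂ) ^ (-(l * (l - 1) : ℤ) / 2) *
            ∑ j ∈ Finset.range (l + 1),
              (qp q (A / q) j * qp q (B / q) j /
                  (qp q q j * qp q (2 * u / (γ * δ)) j * qp q (2 * u / γ) j)) *
                (-1) ^ j * u ^ (2 * j) * (q : ℂ) ^ (j * (j + 1) / 2) := by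
  have hq0' : (q : ℂ) ≠ 0 := by exact_mod_cast hq0.ne'
  have hq : ∀ k : ℕ, 1 - (q : ℂ) ^ (k + 1) ≠ 0 := by
    intro k h
    have h1 : (q : ℝ) ^ (k + 1) < 1 := pow_lt_one₀ hq0.le hq1 (by omega)
    have h2 : (1 : ℝ) - q ^ (k + 1) = 0 := by exact_mod_cast h
    linarith
  have hw : u ^ 2 ≠ 0 := pow_ne_zero 2 hu
  have hγ' : (q : ℂ) = γ ^ 2 * (A * B * δ) / 4 := by rw [hγ]; field_simp
  have hst : 2 * u / (γ * δ) * (2 * u / γ) = A * B * u ^ 2 / q := by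
    rw [hγ']; field_simp; norm_num
  rw [prec_eq q A B (2 * u / (γ * δ)) (2 * u / γ) (u ^ 2) (γ * u / 2) δ z hq0' hq hw hst
    (by rw [hz]; field_simp) (by field_simp; ring) (by rw [hγ']; field_simp; norm_num)
    n hAn hBn hγδ hγu n le_rfl]
  have hQ := qp_self_ne q hq n
  have key : pSum q A B (2 * u / (γ * δ)) (2 * u / γ) (u ^ 2) n = 1 / qp q q n *
      ∑ l ∈ Finset.range (n + 1),
          (qp q ((q : ℂ) ^ (-(n : ℤ))) l * qp q (2 * u / (γ * δ)) l * qp q (2 * u / γ) l /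
              (qp q A l * qp q B l)) *
            (-1) ^ l * u ^ (-(2 * l : ℤ)) * (q : ℂ) ^ (n * l) *
            (q : ℂ) ^ (-(l * (l - 1) : ℤ) / 2) *
            ∑ j ∈ Finset.range (l + 1),
              (qp q (A / q) j * qp q (B / q) j /
                  (qp q q j * qp q (2 * u / (γ * δ)) j * qp q (2 * u / γ) j)) *
                (-1) ^ j * u ^ (2 * j) * (q : ℂ) ^ (j * (j + 1) / 2) := by
    rw [pSum, Finset.mul_sum]
    refine Finset.sum_congr rfl fun l hl => ?_
    have hl' : l ≤ n := by have := Finset.mem_range.1 hl; omega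
    have hneg := qp_neg q hq0' hq n l hl'
    have hE : qInv q (n - l + 2) = 1 / qp q q n * (qp q ((q : ℂ) ^ (-(n : ℤ))) l * (-1) ^ l *
        (q : ℂ) ^ (n * l) * (q : ℂ) ^ (-(l * (l - 1) : ℤ) / 2)) := by
      rw [hneg]; field_simp
    have hu2 : u ^ (-(2 * l : ℤ)) = 1 / (u ^ 2) ^ l := by
      rw [zpow_neg, ← pow_mul, one_div, ← zpow_natCast]; norm_cast
    rw [hE, hu2, cTerm]
    simp only [dTerm, ← pow_mul]
    simp only [div_eq_mul_inv, mul_inv]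
    ring
  rw [key]
  ring
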